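/- Let F₁, F₂, F₃ be three distinct facets of K₁ all containing a common vertex v of K₁ (so that F₁ ∩ F₂ ∩ F₃ = {v}), and let c₁, c₂, c₃ be their centres. If c₁, c₂, c₃ ∈ λK₁ + u for some λ > 0 and u ∈ ℝ³, then λ ≥ 2/3. -/

import Mathlib

open Pointwise

/-- The unit cross-polytope in ℝ³. -/
def K1 : Set (Fin 3 → ℝ) := {x | |x 0| + |x 1| + |x 2| ≤ 1}

/-- The six vertices of the unit cross-polytope. -/
def K1Vertices : Set (Fin 3 → ℝ) :=
  {![1, 0, 0], ![-1, 0, 0], ![0, 1, 0], ![0, -1, 0], ![0, 0, 1], ![0, 0, -1]}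

/-- The facet of `K1` determined by a sign vector `e` (each `e i` being `1` or `-1`). -/
def K1Facet (e : Fin 3 → ℝ) : Set (Fin 3 → ℝ) :=
  convexHull ℝ {![e 0, 0, 0], ![0, e 1, 0], ![0, 0, e 2]}

/-- The centre (centroid) of the facet determined by the sign vector `e`. -/
noncomputable def K1FacetCentre (e : Fin 3 → ℝ) : Fin 3 → ℝ :=
  (1 / 3 : ℝ) • (![e 0, 0, 0] + ![0, e 1, 0] + ![0, 0, e 2])

/-- The centres of two facets of `K1` lying in a translate of `lam • K1` are at `ℓ¹`-distance at
most `2 * lam`; in terms of the sign vectors, at distance at most `6 * lam`. -/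
lemma sum_abs_sub_le_of_centres_mem {e f u : Fin 3 → ℝ} {lam : ℝ} (hlam : 0 < lam)
    (he : K1FacetCentre e ∈ u +ᵥ lam • K1) (hf : K1FacetCentre f ∈ u +ᵥ lam • K1) :
    ∑ i, |e i - f i| ≤ 6 * lam := by
  obtain ⟨_, ⟨x, hx, rfl⟩, hxe⟩ := he
  obtain ⟨_, ⟨y, hy, rfl⟩, hyf⟩ := hf
  have hdiff (i : Fin 3) : e i - f i = 3 * lam * (x i - y i) := by
    have h₁ := congrFun hxe i
    have h₂ := congrFun hyf i
    fin_cases i <;> simp [K1FacetCentre] at h₁ h₂ ⊢ <;> linarith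
  have hx' : |x 0| + |x 1| + |x 2| ≤ 1 := hx
  have hy' : |y 0| + |y 1| + |y 2| ≤ 1 := hy
  have hxy : |x 0 - y 0| + |x 1 - y 1| + |x 2 - y 2| ≤ 2 := by
    linarith [abs_sub (x 0) (y 0), abs_sub (x 1) (y 1), abs_sub (x 2) (y 2)]
  simp only [hdiff, abs_mul, ← Finset.mul_sum, Fin.sum_univ_three, abs_of_pos hlam,
    abs_of_pos (three_pos : (0 : ℝ) < 3)]
  nlinarith

/-- If two sign vectors differ in two coordinates, then a translate of `lam • K1` containing the
centres of both facets has `lam ≥ 2 / 3`. -/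
lemma two_thirds_le_of_ne_of_ne {e f u : Fin 3 → ℝ} {lam : ℝ} (hlam : 0 < lam)
    (he : ∀ i, e i = 1 ∨ e i = -1) (hf : ∀ i, f i = 1 ∨ f i = -1)
    (hce : K1FacetCentre e ∈ u +ᵥ lam • K1) (hcf : K1FacetCentre f ∈ u +ᵥ lam • K1)
    {j k : Fin 3} (hjk : j ≠ k) (hj : e j ≠ f j) (hk : e k ≠ f k) : 2 / 3 ≤ lam := by
  have habs (i : Fin 3) (hi : e i ≠ f i) : |e i - f i| = 2 := by
    rcases he i with h | h <;> rcases hf i with h' | h' <;>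
      first
      | exact absurd (h.trans h'.symm) hi
      | norm_num [h, h']
  have hsum := sum_abs_sub_le_of_centres_mem hlam hce hcf
  have hpair : ∑ i ∈ {j, k}, |e i - f i| ≤ ∑ i, |e i - f i| :=
    Finset.sum_le_sum_of_subset_of_nonneg (Finset.subset_univ _) fun _ _ _ => abs_nonneg _
  rw [Finset.sum_pair hjk, habs j hj, habs k hk] at hpair
  linarith

/-- The facet with sign vector `e` lies in the hyperplane `∑ i, e i * x i = 1`. -/
lemma sum_mul_eq_one_of_mem_K1Facet {e x : Fin 3 → ℝ} (he : ∀ i, e i = 1 ∨ e i = -1)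
    (hx : x ∈ K1Facet e) : ∑ i, e i * x i = 1 := by
  have hconv : Convex ℝ {y : Fin 3 → ℝ | ∑ i, e i * y i = 1} :=
    convex_hyperplane (f := fun y : Fin 3 → ℝ => ∑ i, e i * y i)
      ⟨fun y z => by simp [mul_add, Finset.sum_add_distrib],
        fun c y => by simp [Finset.mul_sum, mul_left_comm]⟩ 1
  refine convexHull_min ?_ hconv hx
  rintro y (rfl | rfl | rfl) <;> simp [Fin.sum_univ_three, mul_self_eq_one_iff, he]

/-- Every vertex of `K1` has a coordinate in which all facets through it have the same sign. -/
lemma exists_coord_eq_of_mem_K1Vertices {v : Fin 3 → ℝ} (hv : v ∈ K1Vertices) :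
    ∃ i, ∀ e : Fin 3 → ℝ, (∀ j, e j = 1 ∨ e j = -1) → v ∈ K1Facet e → e i = v i := by
  have key (e : Fin 3 → ℝ) (he : ∀ j, e j = 1 ∨ e j = -1) (h : v ∈ K1Facet e) :=
    sum_mul_eq_one_of_mem_K1Facet he h
  simp only [Fin.sum_univ_three] at key
  rcases hv with rfl | rfl | rfl | rfl | rfl | rfl
  on_goal 1 => use 0
  on_goal 2 => use 0
  on_goal 3 => use 1
  on_goal 4 => use 1
  on_goal 5 => use 2
  on_goal 6 => use 2
  all_goals
    intro e he h
    have := key e he h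
    simp at this ⊢
    linarith

/-- Two sign vectors of distinct facets that agree in one coordinate differ in one of the other
two. -/
lemma ne_or_ne_of_K1Facet_ne {e f : Fin 3 → ℝ} (hne : K1Facet e ≠ K1Facet f) {i : Fin 3}
    (hi : e i = f i) : e (i + 1) ≠ f (i + 1) ∨ e (i + 2) ≠ f (i + 2) := by
  by_contra! h
  refine hne (congrArg K1Facet (funext fun j => ?_))
  obtain rfl | rfl | rfl : j = i ∨ j = i + 1 ∨ j = i + 2 := by
    clear * -
    decide +revert
  exacts [hi, h.1, h.2]

/-- If `λ • K1 + u` contains the centres of three distinct facets of `K1` all containing a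
common vertex `v` of `K1`, then `λ ≥ 2/3`. -/
theorem ratio_ge_two_thirds_of_three_adjacent_centres
    (e₁ e₂ e₃ : Fin 3 → ℝ)
    (he₁ : ∀ i, e₁ i = 1 ∨ e₁ i = -1) (he₂ : ∀ i, e₂ i = 1 ∨ e₂ i = -1)
    (he₃ : ∀ i, e₃ i = 1 ∨ e₃ i = -1)
    (hne₁₂ : K1Facet e₁ ≠ K1Facet e₂) (hne₁₃ : K1Facet e₁ ≠ K1Facet e₃)
    (hne₂₃ : K1Facet e₂ ≠ K1Facet e₃)
    (v : Fin 3 → ℝ) (hv : v ∈ K1Vertices)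
    (hv₁ : v ∈ K1Facet e₁) (hv₂ : v ∈ K1Facet e₂) (hv₃ : v ∈ K1Facet e₃)
    (lam : ℝ) (hlam : 0 < lam) (u : Fin 3 → ℝ)
    (hc₁ : K1FacetCentre e₁ ∈ u +ᵥ lam • K1)
    (hc₂ : K1FacetCentre e₂ ∈ u +ᵥ lam • K1)
    (hc₃ : K1FacetCentre e₃ ∈ u +ᵥ lam • K1) :
    2 / 3 ≤ lam := by
  obtain ⟨i, hi⟩ := exists_coord_eq_of_mem_K1Vertices hv
  have h₁ := hi e₁ he₁ hv₁
  have h₂ := hi e₂ he₂ hv₂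
  have h₃ := hi e₃ he₃ hv₃
  have d₁₂ := ne_or_ne_of_K1Facet_ne hne₁₂ (h₁.trans h₂.symm)
  have d₁₃ := ne_or_ne_of_K1Facet_ne hne₁₃ (h₁.trans h₃.symm)
  have d₂₃ := ne_or_ne_of_K1Facet_ne hne₂₃ (h₂.trans h₃.symm)
  have hjk : i + 1 ≠ i + 2 := by simp
  have hpair : (e₁ (i + 1) ≠ e₂ (i + 1) ∧ e₁ (i + 2) ≠ e₂ (i + 2)) ∨
      (e₁ (i + 1) ≠ e₃ (i + 1) ∧ e₁ (i + 2) ≠ e₃ (i + 2)) ∨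
      (e₂ (i + 1) ≠ e₃ (i + 1) ∧ e₂ (i + 2) ≠ e₃ (i + 2)) := by
    have a₁ := he₁ (i + 1)
    have a₂ := he₂ (i + 1)
    have a₃ := he₃ (i + 1)
    have b₁ := he₁ (i + 2)
    have b₂ := he₂ (i + 2)
    have b₃ := he₃ (i + 2)
    clear * - d₁₂ d₁₃ d₂₃ a₁ a₂ a₃ b₁ b₂ b₃
    grind
  rcases hpair with h | h | h
  · exact two_thirds_le_of_ne_of_ne hlam he₁ he₂ hc₁ hc₂ hjk h.1 h.2
  · exact two_thirds_le_of_ne_of_ne hlam he₁ he₃ hc₁ hc₃ hjk h.1 h.2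
  · exact two_thirds_le_of_ne_of_ne hlam he₂ he₃ hc₂ hc₃ hjk h.1 h.2
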